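/- arXiv:1407.0615 — 2 statements merged into one kernel-verified Lean document; each statement's English description precedes it below -/
import Mathlib

section
/- Let ν be a real number with ν ≥ 1. The function z ↦ J_{ν−1}(z) + J_ν(z) has exactly one zero in the open interval (0, j_{ν,1}), namely its first positive zero λ⁺_{ν−1,1}, and this zero satisfies j′_{ν,1} < λ⁺_{ν−1,1} < j_{ν,1}. -/
/-- Bessel function of the first kind of real order `ν`, defined via its power series
`J_ν(z) = ∑ₘ (−1)^m / (m! Γ(ν+m+1)) (z/2)^(ν+2m)` (with real-exponent powers). -/
noncomputable def besselJ (ν z : ℝ) : ℝ :=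
  ∑' m : ℕ, ((-1 : ℝ) ^ m / (Nat.factorial m * Real.Gamma (ν + m + 1))) *
    (z / 2) ^ (ν + 2 * (m : ℝ))

/-- `x` (indexed by `k ≥ 1`) enumerates the positive zeroes of `f`: it is strictly
increasing on indices `k ≥ 1`, each `x k` is a positive zero of `f`, and every positive
zero of `f` is some `x k`. -/
def EnumPosZeros (f : ℝ → ℝ) (x : ℕ → ℝ) : Prop :=
  StrictMonoOn x (Set.Ici 1) ∧ (∀ k, 1 ≤ k → 0 < x k ∧ f (x k) = 0) ∧
    ∀ z : ℝ, 0 < z → f z = 0 → ∃ k, 1 ≤ k ∧ x k = z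

/-!
Put `f = J_{ν-1}` and `g = J_ν`. The recurrences `f' = (ν - 1) / z * f - g` and
`g' = f - ν / z * g` show that `z² (f g' - f' g) = z² (f² + g²) - (2ν - 1) z f g` has derivative
`z (f² + g²)`; since it vanishes at `0`, it is positive on `(0, j_{ν,1}]`. Hence `f / g` is strictly
decreasing on `(0, j_{ν,1})`, so that `f + g` has at most one zero there, and
`f (j_{ν,1}) = g' (j_{ν,1})`, being nonzero, is negative. Finally, Rolle's theorem provides a
critical point `c` of `g` in `(0, j_{ν,1})`; there `f (c) = ν / c * g (c) > 0`, so `f + g` changes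
sign between `c` and `j_{ν,1}`.
-/

open Filter Set Topology

theorem EnumPosZeros.isLeast_one {f : ℝ → ℝ} {x : ℕ → ℝ} (h : EnumPosZeros f x) :
    IsLeast {z | 0 < z ∧ f z = 0} (x 1) := by
  obtain ⟨hmono, hzero, hsurj⟩ := h
  refine ⟨hzero 1 le_rfl, ?_⟩
  rintro z ⟨hz, hfz⟩
  obtain ⟨k, hk, rfl⟩ := hsurj z hz hfz
  exact hmono.monotoneOn self_mem_Ici hk hk

theorem hasDerivAt_tsum_mul_pow {a : ℕ → ℝ} {t R : ℝ} (ht : |t| < R)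
    (ha : Summable fun m ↦ a m * (m * R ^ (m - 1))) :
    HasDerivAt (fun y ↦ ∑' m, a m * y ^ m) (∑' m, a m * (m * t ^ (m - 1))) t := by
  have hR : 0 < R := (abs_nonneg t).trans_lt ht
  refine hasDerivAt_tsum_of_isPreconnected ha.norm Metric.isOpen_ball
    (convex_ball (0 : ℝ) R).isPreconnected (fun m y _ ↦ (hasDerivAt_pow m y).const_mul _)
    (fun m y hy ↦ ?_) (Metric.mem_ball_self hR) ?_ (by simpa using ht)
  · have hyR : |y| ≤ |R| := (mem_ball_zero_iff.1 hy).le.trans (le_abs_self R)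
    simp only [norm_mul, norm_pow, Real.norm_eq_abs]
    gcongr
  · exact summable_of_ne_finset_zero (s := {0}) fun m hm ↦ by simp_all

section BesselSeries

/-- The coefficients of the even entire function `(z / 2) ^ (-ν) * J_ν(z)`, as a power series in
`(z / 2) ^ 2`. At a pole of the Gamma function Lean's conventions `Γ = 0` and `x / 0 = 0` give the
correct value `1 / Γ = 0`. -/
noncomputable def besselCoeff (ν : ℝ) (m : ℕ) : ℝ :=
  (-1) ^ m / (m.factorial * Real.Gamma (ν + m + 1))

/-- The entire function `P_ν` with `J_ν(z) = (z / 2) ^ ν * P_ν((z / 2) ^ 2)`; in terms of the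
Bessel–Clifford function, `P_ν(t) = C_ν(-t)`. -/
noncomputable def besselSeries (ν t : ℝ) : ℝ := ∑' m, besselCoeff ν m * t ^ m

variable (ν t : ℝ) (m : ℕ)

theorem one_div_Gamma_eq_mul_one_div_Gamma_add_one (s : ℝ) :
    1 / Real.Gamma s = s * (1 / Real.Gamma (s + 1)) := by
  rcases eq_or_ne s 0 with rfl | hs
  · simp [Real.Gamma_zero]
  · rw [Real.Gamma_add_one hs, mul_one_div, mul_comm s, div_mul_cancel_right₀ hs, one_div]

theorem besselCoeff_eq_mul_besselCoeff_add_one :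
    besselCoeff ν m = (ν + m + 1) * besselCoeff (ν + 1) m := by
  have hΓ := one_div_Gamma_eq_mul_one_div_Gamma_add_one (ν + m + 1)
  unfold besselCoeff
  rw [show ν + 1 + m + 1 = ν + m + 1 + 1 by ring]
  linear_combination (-1) ^ m / (m.factorial : ℝ) * hΓ

theorem succ_mul_besselCoeff_succ :
    (m + 1 : ℝ) * besselCoeff ν (m + 1) = -besselCoeff (ν + 1) m := by
  unfold besselCoeff
  rw [show ν + (m + 1 : ℕ) + 1 = ν + 1 + m + 1 by push_cast; ring, Nat.factorial_succ, pow_succ]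
  push_cast
  field_simp

theorem summable_besselCoeff_mul_pow : Summable fun m ↦ besselCoeff ν m * t ^ m := by
  have hgrowth : ∀ᶠ m : ℕ in atTop, 2 * |t| ≤ |ν + m + 1| := by
    filter_upwards [tendsto_natCast_atTop_atTop.eventually_ge_atTop (2 * |t| - ν - 1)] with m hm
    exact le_trans (by linarith) (le_abs_self _)
  refine summable_of_ratio_norm_eventually_le (r := 1 / 2) (by norm_num) ?_
  filter_upwards [hgrowth] with m hm
  have hcoeff : |besselCoeff ν m| = |ν + m + 1| * ((m + 1) * |besselCoeff ν (m + 1)|) := by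
    have hsucc : |besselCoeff (ν + 1) m| = (m + 1) * |besselCoeff ν (m + 1)| := by
      rw [← abs_neg, ← succ_mul_besselCoeff_succ, abs_mul, abs_of_nonneg (by positivity)]
    rw [besselCoeff_eq_mul_besselCoeff_add_one, abs_mul, hsucc]
  have hle : |besselCoeff ν (m + 1)| ≤ (m + 1) * |besselCoeff ν (m + 1)| :=
    le_mul_of_one_le_left (abs_nonneg _) (by simp)
  simp only [norm_mul, norm_pow, Real.norm_eq_abs, hcoeff]
  calc |besselCoeff ν (m + 1)| * |t| ^ (m + 1)
      = 1 / 2 * ((2 * |t|) * |besselCoeff ν (m + 1)| * |t| ^ m) := by ring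
    _ ≤ 1 / 2 * (|ν + m + 1| * ((m + 1) * |besselCoeff ν (m + 1)|) * |t| ^ m) := by gcongr

theorem hasSum_besselSeries :
    HasSum (fun m ↦ besselCoeff ν m * t ^ m) (besselSeries ν t) :=
  (summable_besselCoeff_mul_pow ν t).hasSum

theorem hasSum_besselCoeff_mul_deriv_pow :
    HasSum (fun m : ℕ ↦ besselCoeff ν m * (m * t ^ (m - 1))) (-besselSeries (ν + 1) t) := by
  rw [← hasSum_nat_add_iff' 1]
  have hterm (m : ℕ) : besselCoeff ν (m + 1) * ((m + 1 : ℕ) * t ^ (m + 1 - 1)) =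
      -(besselCoeff (ν + 1) m * t ^ m) := by
    rw [Nat.add_sub_cancel]
    push_cast
    linear_combination t ^ m * succ_mul_besselCoeff_succ ν m
  simp only [hterm, Finset.range_one, Finset.sum_singleton, Nat.cast_zero, zero_mul, mul_zero,
    sub_zero]
  exact (hasSum_besselSeries (ν + 1) t).neg

theorem hasDerivAt_besselSeries : HasDerivAt (besselSeries ν) (-besselSeries (ν + 1) t) t := by
  rw [← (hasSum_besselCoeff_mul_deriv_pow ν t).tsum_eq]
  exact hasDerivAt_tsum_mul_pow (lt_add_one |t|) (hasSum_besselCoeff_mul_deriv_pow ν _).summable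

theorem continuous_besselSeries : Continuous (besselSeries ν) :=
  continuous_iff_continuousAt.2 fun t ↦ (hasDerivAt_besselSeries ν t).continuousAt

theorem besselSeries_sub_one :
    besselSeries (ν - 1) t = ν * besselSeries ν t - t * besselSeries (ν + 1) t := by
  have hterm (m : ℕ) : besselCoeff (ν - 1) m * t ^ m =
      ν * (besselCoeff ν m * t ^ m) + t * (besselCoeff ν m * (m * t ^ (m - 1))) := by
    have hpow : (m : ℝ) * t ^ m = t * (m * t ^ (m - 1)) := by
      rcases m.eq_zero_or_pos with rfl | hm
      · simp
      · rw [mul_left_comm, mul_pow_sub_one hm.ne']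
    rw [besselCoeff_eq_mul_besselCoeff_add_one, sub_add_cancel]
    linear_combination besselCoeff ν m * hpow
  have hsum := ((hasSum_besselSeries ν t).mul_left ν).add
    ((hasSum_besselCoeff_mul_deriv_pow ν t).mul_left t)
  simp_rw [← hterm] at hsum
  rw [besselSeries, hsum.tsum_eq]
  ring

theorem besselSeries_zero_right : besselSeries ν 0 = 1 / Real.Gamma (ν + 1) := by
  rw [besselSeries, tsum_eq_single 0 fun m hm ↦ by simp [hm]]
  simp [besselCoeff]

end BesselSeries

section BesselJ

variable {ν z : ℝ}

theorem besselJ_eq_rpow_mul_besselSeries (hz : 0 < z) :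
    besselJ ν z = (z / 2) ^ ν * besselSeries ν ((z / 2) ^ 2) := by
  rw [besselJ, besselSeries, ← tsum_mul_left]
  refine tsum_congr fun m ↦ ?_
  rw [Real.rpow_add (by positivity), ← pow_mul, ← Real.rpow_natCast (z / 2) (2 * m), besselCoeff]
  push_cast
  ring

theorem besselJ_zero_right (hν : 0 < ν) : besselJ ν 0 = 0 := by
  have hterm (m : ℕ) : (0 : ℝ) ^ (ν + 2 * (m : ℝ)) = 0 := Real.zero_rpow (by positivity)
  simp [besselJ, hterm]

theorem continuousOn_besselJ_Ici (hν : 0 < ν) : ContinuousOn (besselJ ν) (Ici 0) := by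
  have hcont : Continuous fun z : ℝ ↦ (z / 2) ^ ν * besselSeries ν ((z / 2) ^ 2) :=
    ((continuous_id.div_const 2).rpow_const fun _ ↦ Or.inr hν.le).mul
      ((continuous_besselSeries ν).comp (by fun_prop))
  refine hcont.continuousOn.congr fun z hz ↦ ?_
  rcases (mem_Ici.1 hz).eq_or_lt with rfl | hz
  · simp [besselJ_zero_right hν, Real.zero_rpow hν.ne']
  · exact besselJ_eq_rpow_mul_besselSeries hz

theorem hasDerivAt_besselJ (ν : ℝ) (hz : 0 < z) :
    HasDerivAt (besselJ ν) (ν / z * besselJ ν z - besselJ (ν + 1) z) z := by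
  have hz2 : z / 2 ≠ 0 := by positivity
  have hhalf : HasDerivAt (fun y : ℝ ↦ y / 2) (1 / 2) z := (hasDerivAt_id z).div_const 2
  have hsq : HasDerivAt (fun y : ℝ ↦ (y / 2) ^ 2) (z / 2) z :=
    (hhalf.fun_pow 2).congr_deriv (by ring)
  have hprod := (hhalf.rpow_const (p := ν) (Or.inl hz2)).mul
    ((hasDerivAt_besselSeries ν _).comp z hsq)
  have heq : besselJ ν =ᶠ[𝓝 z] fun y ↦ (y / 2) ^ ν * besselSeries ν ((y / 2) ^ 2) := by
    filter_upwards [lt_mem_nhds hz] with y hy using besselJ_eq_rpow_mul_besselSeries hy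
  refine (hprod.congr_of_eventuallyEq heq).congr_deriv ?_
  rw [besselJ_eq_rpow_mul_besselSeries hz, besselJ_eq_rpow_mul_besselSeries hz,
    Real.rpow_sub_one hz2, Real.rpow_add_one hz2, Function.comp_apply]
  field_simp
  ring

theorem hasDerivAt_besselJ_sub_one (ν : ℝ) (hz : 0 < z) :
    HasDerivAt (besselJ (ν - 1)) ((ν - 1) / z * besselJ (ν - 1) z - besselJ ν z) z := by
  simpa only [sub_add_cancel] using hasDerivAt_besselJ (ν - 1) hz

theorem mul_besselJ_sub_one (ν : ℝ) (hz : 0 < z) :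
    z * besselJ (ν - 1) z = 2 * ν * besselJ ν z - z * besselJ (ν + 1) z := by
  have hz2 : z / 2 ≠ 0 := by positivity
  simp only [besselJ_eq_rpow_mul_besselSeries hz]
  rw [besselSeries_sub_one, Real.rpow_sub_one hz2, Real.rpow_add_one hz2]
  field_simp

theorem hasDerivAt_besselJ' (ν : ℝ) (hz : 0 < z) :
    HasDerivAt (besselJ ν) (besselJ (ν - 1) z - ν / z * besselJ ν z) z := by
  refine (hasDerivAt_besselJ ν hz).congr_deriv ?_
  field_simp
  linear_combination -mul_besselJ_sub_one ν hz

theorem continuousAt_besselJ (ν : ℝ) (hz : 0 < z) : ContinuousAt (besselJ ν) z :=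
  (hasDerivAt_besselJ ν hz).continuousAt

theorem continuousOn_mul_besselJ_sub_one_Ici (hν : 0 < ν) :
    ContinuousOn (fun z ↦ z * besselJ (ν - 1) z) (Ici 0) := by
  have hJ := continuousOn_besselJ_Ici hν
  have hJ' := continuousOn_besselJ_Ici (add_pos hν one_pos)
  have hcont : ContinuousOn (fun z ↦ 2 * ν * besselJ ν z - z * besselJ (ν + 1) z) (Ici 0) := by
    fun_prop
  refine hcont.congr fun z hz ↦ ?_
  rcases (mem_Ici.1 hz).eq_or_lt with rfl | hz
  · simp [besselJ_zero_right hν]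
  · exact mul_besselJ_sub_one ν hz

theorem besselJ_pos_of_forall_ne_zero {b : ℝ} (hν : -1 < ν)
    (hne : ∀ w ∈ Ioo 0 b, besselJ ν w ≠ 0) (hz : z ∈ Ioo 0 b) : 0 < besselJ ν z := by
  rw [besselJ_eq_rpow_mul_besselSeries hz.1]
  have hz2 : 0 < z / 2 := half_pos hz.1
  suffices 0 < besselSeries ν ((z / 2) ^ 2) by positivity
  by_contra! hneg
  have hcont : Continuous fun w : ℝ ↦ besselSeries ν ((w / 2) ^ 2) :=
    (continuous_besselSeries ν).comp (by fun_prop)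
  have hzero : 0 < besselSeries ν ((0 / 2) ^ 2) := by
    have hΓ : 0 < Real.Gamma (ν + 1) := Real.Gamma_pos_of_pos (by linarith)
    simpa [besselSeries_zero_right] using hΓ
  obtain ⟨w, hw, hw0⟩ := intermediate_value_Ioc' hz.1.le hcont.continuousOn ⟨hneg, hzero⟩
  refine hne w ⟨hw.1, hw.2.trans_lt hz.2⟩ ?_
  rw [besselJ_eq_rpow_mul_besselSeries hw.1]
  exact mul_eq_zero_of_right _ hw0

end BesselJ

section Wronskian

variable {ν z : ℝ}

/-- The Wronskian `J_{ν-1} J_ν' - J_{ν-1}' J_ν` multiplied by `z ^ 2`, with the derivatives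
eliminated by the recurrences. The factor makes it extend continuously by `0` to `z = 0`. -/
noncomputable def besselScaledWronskian (ν z : ℝ) : ℝ :=
  z ^ 2 * (besselJ (ν - 1) z ^ 2 + besselJ ν z ^ 2) -
    (2 * ν - 1) * z * besselJ (ν - 1) z * besselJ ν z

theorem hasDerivAt_besselScaledWronskian (ν : ℝ) (hz : 0 < z) :
    HasDerivAt (besselScaledWronskian ν)
      (z * (besselJ (ν - 1) z ^ 2 + besselJ ν z ^ 2)) z := by
  have hf := hasDerivAt_besselJ_sub_one ν hz
  have hg := hasDerivAt_besselJ' ν hz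
  refine (((hasDerivAt_pow 2 z).fun_mul ((hf.fun_pow 2).fun_add (hg.fun_pow 2))).fun_sub
    ((((hasDerivAt_id' z).const_mul (2 * ν - 1)).fun_mul hf).fun_mul hg)).congr_deriv ?_
  field_simp
  ring

theorem continuousOn_besselScaledWronskian (hν : 0 < ν) :
    ContinuousOn (besselScaledWronskian ν) (Ici 0) := by
  have hf := continuousOn_mul_besselJ_sub_one_Ici hν
  have hg := continuousOn_besselJ_Ici hν
  refine (((hf.pow 2).add ((continuousOn_id.mul hg).pow 2)).sub
    ((hf.const_mul (2 * ν - 1)).mul hg)).congr fun z _ ↦ ?_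
  simp only [besselScaledWronskian, Pi.add_apply, Pi.sub_apply, Pi.mul_apply, Pi.pow_apply, id]
  ring

theorem besselScaledWronskian_pos (hν : 0 < ν) (hz : 0 < z)
    (hne : ∀ w ∈ Ioo 0 z, besselJ ν w ≠ 0) : 0 < besselScaledWronskian ν z := by
  have hmono : StrictMonoOn (besselScaledWronskian ν) (Icc 0 z) := by
    refine strictMonoOn_of_deriv_pos (convex_Icc 0 z)
      ((continuousOn_besselScaledWronskian hν).mono Icc_subset_Ici_self) fun w hw ↦ ?_
    rw [interior_Icc] at hw
    rw [(hasDerivAt_besselScaledWronskian ν hw.1).deriv]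
    have hw0 := hw.1
    have hJ := hne w hw
    positivity
  have hzero : besselScaledWronskian ν 0 = 0 := by simp [besselScaledWronskian]
  exact hzero ▸ hmono (left_mem_Icc.2 hz.le) (right_mem_Icc.2 hz.le) hz

theorem strictAntiOn_besselJ_sub_one_div {b : ℝ} (hν : 0 < ν)
    (hne : ∀ w ∈ Ioo 0 b, besselJ ν w ≠ 0) :
    StrictAntiOn (fun z ↦ besselJ (ν - 1) z / besselJ ν z) (Ioo 0 b) := by
  have hderiv (z) (hz : z ∈ Ioo 0 b) :
      HasDerivAt (fun z ↦ besselJ (ν - 1) z / besselJ ν z)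
        (-(besselScaledWronskian ν z / (z * besselJ ν z) ^ 2)) z := by
    have hz0 := hz.1.ne'
    have hJ := hne z hz
    refine ((hasDerivAt_besselJ_sub_one ν hz.1).fun_div (hasDerivAt_besselJ' ν hz.1)
      hJ).congr_deriv ?_
    rw [besselScaledWronskian]
    field_simp
    ring
  refine strictAntiOn_of_deriv_neg (convex_Ioo 0 b)
    (fun z hz ↦ (hderiv z hz).continuousAt.continuousWithinAt) fun z hz ↦ ?_
  rw [interior_Ioo] at hz
  rw [(hderiv z hz).deriv, neg_lt_zero]
  have hz0 := hz.1
  have hJ := hne z hz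
  have hW := besselScaledWronskian_pos hν hz.1 fun w hw ↦ hne w ⟨hw.1, hw.2.trans hz.2⟩
  positivity

end Wronskian

section FirstZero

variable {ν b : ℝ}

theorem ne_zero_of_isLeast_pos_zeros {f : ℝ → ℝ} (hb : IsLeast {z | 0 < z ∧ f z = 0} b) :
    ∀ z ∈ Ioo 0 b, f z ≠ 0 :=
  fun _ hz hfz ↦ hz.2.not_ge (hb.2 ⟨hz.1, hfz⟩)

theorem eq_of_besselJ_sub_one_add_besselJ_eq_zero {y z : ℝ} (hν : 0 < ν)
    (hne : ∀ w ∈ Ioo 0 b, besselJ ν w ≠ 0) (hy : y ∈ Ioo 0 b) (hz : z ∈ Ioo 0 b)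
    (hy0 : besselJ (ν - 1) y + besselJ ν y = 0) (hz0 : besselJ (ν - 1) z + besselJ ν z = 0) :
    y = z := by
  refine (strictAntiOn_besselJ_sub_one_div hν hne).injOn hy hz ?_
  simp only [eq_neg_of_add_eq_zero_left hy0, eq_neg_of_add_eq_zero_left hz0, neg_div,
    div_self (hne y hy), div_self (hne z hz)]

theorem besselJ_sub_one_neg_of_isLeast (hν : 0 < ν)
    (hb : IsLeast {z | 0 < z ∧ besselJ ν z = 0} b) : besselJ (ν - 1) b < 0 := by
  obtain ⟨hb0, hJb⟩ := hb.1
  have hne := ne_zero_of_isLeast_pos_zeros hb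
  have hnonzero : besselJ (ν - 1) b ≠ 0 := by
    intro hzero
    simpa [besselScaledWronskian, hzero, hJb] using besselScaledWronskian_pos hν hb0 hne
  refine lt_of_le_of_ne (not_lt.1 fun hpos ↦ ?_) hnonzero
  have hderiv : 0 < deriv (besselJ ν) b := by
    rw [(hasDerivAt_besselJ' ν hb0).deriv, hJb]
    simpa using hpos
  have hsign := (eventually_nhdsWithin_sign_eq_of_deriv_pos hderiv hJb).filter_mono
    (nhdsWithin_le_nhds (s := Iio b))
  obtain ⟨y, hy, hyb⟩ := (hsign.and (Ioo_mem_nhdsLT hb0)).exists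
  rw [sign_neg (sub_neg.2 hyb.2),
    sign_pos (besselJ_pos_of_forall_ne_zero (by linarith) hne hyb)] at hy
  exact absurd hy (by decide)

theorem exists_critical_lt_besselJ_sub_one_add_zero (hν : 0 < ν)
    (hb : IsLeast {z | 0 < z ∧ besselJ ν z = 0} b) :
    ∃ c ∈ Ioo 0 b, deriv (besselJ ν) c = 0 ∧
      ∃ z ∈ Ioo c b, besselJ (ν - 1) z + besselJ ν z = 0 := by
  obtain ⟨hb0, hJb⟩ := hb.1
  obtain ⟨c, hc, hc'⟩ := exists_deriv_eq_zero hb0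
    ((continuousOn_besselJ_Ici hν).mono Icc_subset_Ici_self)
    ((besselJ_zero_right hν).trans hJb.symm)
  refine ⟨c, hc, hc', ?_⟩
  have hc0 : 0 < c := hc.1
  have hJc : 0 < besselJ ν c :=
    besselJ_pos_of_forall_ne_zero (by linarith) (ne_zero_of_isLeast_pos_zeros hb) hc
  have hfc : besselJ (ν - 1) c = ν / c * besselJ ν c :=
    sub_eq_zero.1 ((hasDerivAt_besselJ' ν hc0).deriv ▸ hc')
  have hpos : 0 < besselJ (ν - 1) c + besselJ ν c := by rw [hfc]; positivity
  have hneg : besselJ (ν - 1) b + besselJ ν b < 0 := by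
    simpa [hJb] using besselJ_sub_one_neg_of_isLeast hν hb
  have hcont : ContinuousOn (fun z ↦ besselJ (ν - 1) z + besselJ ν z) (Icc c b) := fun z hz ↦
    have hz0 : 0 < z := hc0.trans_le hz.1
    ((continuousAt_besselJ _ hz0).add (continuousAt_besselJ _ hz0)).continuousWithinAt
  exact intermediate_value_Ioo' hc.2.le hcont ⟨hneg, hpos⟩

end FirstZero

theorem stmt11_general (ν : ℝ) (hν : 0 < ν)
    (jn jpn lamp : ℕ → ℝ)
    (hjn : EnumPosZeros (besselJ ν) jn)
    (hjpn : EnumPosZeros (deriv (besselJ ν)) jpn)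
    (hlamp : EnumPosZeros (fun z => besselJ (ν - 1) z + besselJ ν z) lamp) :
    lamp 1 ∈ Set.Ioo (0 : ℝ) (jn 1) ∧
    (∀ z ∈ Set.Ioo (0 : ℝ) (jn 1), besselJ (ν - 1) z + besselJ ν z = 0 → z = lamp 1) ∧
    jpn 1 < lamp 1 ∧ lamp 1 < jn 1 := by
  have hj := hjn.isLeast_one
  obtain ⟨hlamp_zero, hlamp_le⟩ := hlamp.isLeast_one
  obtain ⟨c, hc, hc', z, hz, hz0⟩ := exists_critical_lt_besselJ_sub_one_add_zero hν hj
  have hz_pos : 0 < z := hc.1.trans hz.1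
  have hlamp_mem : lamp 1 ∈ Ioo 0 (jn 1) :=
    ⟨hlamp_zero.1, (hlamp_le ⟨hz_pos, hz0⟩).trans_lt hz.2⟩
  have huniq : ∀ w ∈ Ioo 0 (jn 1), besselJ (ν - 1) w + besselJ ν w = 0 → w = lamp 1 :=
    fun w hw hw0 ↦ eq_of_besselJ_sub_one_add_besselJ_eq_zero hν (ne_zero_of_isLeast_pos_zeros hj)
      hw hlamp_mem hw0 hlamp_zero.2
  refine ⟨hlamp_mem, huniq, ?_, hlamp_mem.2⟩
  calc jpn 1 ≤ c := hjpn.isLeast_one.2 ⟨hc.1, hc'⟩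
    _ < z := hz.1
    _ = lamp 1 := huniq z ⟨hz_pos, hz.2⟩ hz0

/-- For `ν ≥ 1`, the function `z ↦ J_{ν−1}(z) + J_ν(z)` has exactly one zero
in `(0, j_{ν,1})`, namely `λ⁺_{ν−1,1}`, and it satisfies `j′_{ν,1} < λ⁺_{ν−1,1} < j_{ν,1}`. -/
theorem stmt11 (ν : ℝ) (hν : 1 ≤ ν)
    (jn jpn lamp : ℕ → ℝ)
    (hjn : EnumPosZeros (besselJ ν) jn)
    (hjpn : EnumPosZeros (deriv (besselJ ν)) jpn)
    (hlamp : EnumPosZeros (fun z => besselJ (ν - 1) z + besselJ ν z) lamp) :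
    lamp 1 ∈ Set.Ioo (0 : ℝ) (jn 1) ∧
    (∀ z ∈ Set.Ioo (0 : ℝ) (jn 1), besselJ (ν - 1) z + besselJ ν z = 0 → z = lamp 1) ∧
    jpn 1 < lamp 1 ∧ lamp 1 < jn 1 :=
  stmt11_general ν (zero_lt_one.trans_le hν) jn jpn lamp hjn hjpn hlamp
end

section
/- Let ν be a real number with ν ≥ 1. For every integer k ≥ 1 one has λ⁻_{ν−1,k} < λ⁺_{ν−1,k} < λ⁻_{ν−1,k+1}; in other words, between two consecutive positive zeroes of z ↦ J_{ν−1}(z) − J_ν(z) there is exactly one positive zero of z ↦ J_{ν−1}(z) + J_ν(z), and vice versa. -/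
/-!
Multiplying by `√z` turns the recurrences for `J_{ν-1}'` and `J_ν'` into the first order system
`W_ε' = ((ν - 1/2) / z + ε) W_{-ε}` for `W_ε = √z (J_{ν-1} + ε J_ν)`, `ε = ±1`, where `W_ε` is
continuous at `0` with value `0` as soon as `ν > 1/2`. By Rolle, zeroes of `W_{-ε}` separate those
of `W_ε` on every interval where the coefficient does not vanish. For `ε = 1` it is positive
throughout; for `ε = -1` it vanishes only at `ν - 1/2`. If the first zero of `W_{-1}` were at most
`ν - 1/2`, Rolle on the interval from `0` to it would give a zero of `W_1` there, and Rolle from `0`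
to the latter an even earlier zero of `W_{-1}`.
-/

open Filter Set
open scoped Nat Topology

theorem div_factorial_succ_mul_succ {K : Type*} [Field K] [CharZero K] (c : K) (m : ℕ) :
    c / (m + 1)! * (m + 1) = c / m ! := by
  have hm : (m + 1 : K) ≠ 0 := Nat.cast_add_one_ne_zero m
  rw [Nat.factorial_succ]
  push_cast
  field_simp

section ExpGenFun

variable {𝕜 : Type*} [RCLike 𝕜]

/-- The exponential generating function `∑ₘ aₘ wᵐ / m!` of a sequence `a`. -/
noncomputable def expGenFun (a : ℕ → 𝕜) (w : 𝕜) : 𝕜 :=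
  ∑' m : ℕ, a m / m ! * w ^ m

variable {a : ℕ → 𝕜}

theorem summable_expGenFun (ha : BddAbove (range fun m => ‖a m‖)) (w : 𝕜) :
    Summable fun m : ℕ => a m / m ! * w ^ m := by
  obtain ⟨C, hC⟩ := ha
  refine .of_norm_bounded ((Real.summable_pow_div_factorial ‖w‖).mul_left C) fun m => ?_
  calc ‖a m / m ! * w ^ m‖ = ‖a m‖ * (‖w‖ ^ m / m !) := by
        rw [norm_mul, norm_div, norm_pow, RCLike.norm_natCast]; ring
    _ ≤ C * (‖w‖ ^ m / m !) := by gcongr; exact hC (mem_range_self m)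

theorem hasSum_deriv_expGenFun (ha : BddAbove (range fun m => ‖a m‖)) (w : 𝕜) :
    HasSum (fun m : ℕ => a m / m ! * (m * w ^ (m - 1))) (expGenFun (fun m => a (m + 1)) w) := by
  have hshift : BddAbove (range fun m => ‖a (m + 1)‖) :=
    ha.mono (range_comp_subset_range (· + 1) fun m => ‖a m‖)
  rw [← hasSum_nat_add_iff' 1]
  convert! (summable_expGenFun hshift w).hasSum using 1
  · ext m
    rw [add_tsub_cancel_right, Nat.cast_succ, ← mul_assoc, div_factorial_succ_mul_succ]
  · simp [expGenFun]

theorem hasDerivAt_expGenFun (ha : BddAbove (range fun m => ‖a m‖)) (w : 𝕜) :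
    HasDerivAt (expGenFun a) (expGenFun (fun m => a (m + 1)) w) w := by
  set R := ‖w‖ + 1
  have hw : w ∈ Metric.ball (0 : 𝕜) R := by simp [R]
  have hbound : Summable fun m : ℕ => ‖a m‖ / m ! * (m * R ^ (m - 1)) :=
    (hasSum_deriv_expGenFun (a := fun m => ‖a m‖) (by simpa only [norm_norm] using ha) R).summable
  rw [← (hasSum_deriv_expGenFun ha w).tsum_eq]
  refine hasDerivAt_tsum_of_isPreconnected (g := fun m y => a m / m ! * y ^ m)
    (g' := fun m y => a m / m ! * (m * y ^ (m - 1))) hbound Metric.isOpen_ball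
    (convex_ball _ _).isPreconnected (fun m y _ => (hasDerivAt_pow m y).const_mul _)
    (fun m y hy => ?_) hw (summable_expGenFun ha w) hw
  have hyR : ‖y‖ ≤ R := (mem_ball_zero_iff.1 hy).le
  rw [norm_mul, norm_div, norm_mul, norm_pow, RCLike.norm_natCast, RCLike.norm_natCast]
  gcongr

theorem hasSum_natCast_mul_expGenFun (ha : BddAbove (range fun m => ‖a m‖)) (w : 𝕜) :
    HasSum (fun m : ℕ => m * (a m / m ! * w ^ m)) (w * expGenFun (fun m => a (m + 1)) w) := by
  convert! (hasSum_deriv_expGenFun ha w).mul_left w using 2 with m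
  cases m with
  | zero => simp
  | succ m => rw [add_tsub_cancel_right, pow_succ]; ring

end ExpGenFun

theorem inv_Gamma_eq_mul_inv_Gamma_add_one (s : ℝ) :
    (Real.Gamma s)⁻¹ = s * (Real.Gamma (s + 1))⁻¹ := by
  rcases eq_or_ne s 0 with rfl | hs
  · simp
  · rw [Real.Gamma_add_one hs, mul_inv, mul_inv_cancel_left₀ hs]

theorem bddAbove_range_inv_Gamma (μ : ℝ) :
    BddAbove (range fun m : ℕ => ‖(Real.Gamma (μ + m + 1))⁻¹‖) := by
  refine IsBoundedUnder.bddAbove_range (isBoundedUnder_of_eventually_le (a := 1) ?_)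
  filter_upwards [eventually_ge_atTop ⌈1 - μ⌉₊] with m hm
  have hm2 : 2 ≤ μ + m + 1 := by linarith [Nat.ceil_le.1 hm]
  have hΓ : 1 ≤ Real.Gamma (μ + m + 1) := by
    simpa using Real.Gamma_strictMonoOn_Ici.monotoneOn self_mem_Ici hm2 hm2
  rw [norm_inv]
  exact inv_le_one_of_one_le₀ (hΓ.trans (le_abs_self _))

/-- The Bessel–Clifford function `∑ₘ wᵐ / (m! Γ(μ + m + 1))`: the entire factor of the Bessel
function, `J_μ(z) = (z/2)^μ C_μ(-(z/2)²)`. Since `Real.Gamma` is `0` at its poles, the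
coefficients have the correct value `0` there. -/
noncomputable def besselClifford (μ : ℝ) : ℝ → ℝ :=
  expGenFun fun m : ℕ => (Real.Gamma (μ + m + 1))⁻¹

theorem expGenFun_inv_Gamma_shift (μ w : ℝ) :
    expGenFun (fun m : ℕ => (Real.Gamma (μ + (m + 1 : ℕ) + 1))⁻¹) w = besselClifford (μ + 1) w := by
  simp only [besselClifford, Nat.cast_add, Nat.cast_one, add_right_comm, add_assoc]

theorem hasDerivAt_besselClifford (μ w : ℝ) :
    HasDerivAt (besselClifford μ) (besselClifford (μ + 1) w) w := by
  rw [← expGenFun_inv_Gamma_shift]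
  exact hasDerivAt_expGenFun (bddAbove_range_inv_Gamma μ) w

theorem besselClifford_sub_one (μ w : ℝ) :
    besselClifford (μ - 1) w = μ * besselClifford μ w + w * besselClifford (μ + 1) w := by
  have hbdd := bddAbove_range_inv_Gamma μ
  have hsum := ((summable_expGenFun hbdd w).hasSum.mul_left μ).add
    (hasSum_natCast_mul_expGenFun hbdd w)
  rw [expGenFun_inv_Gamma_shift] at hsum
  refine Eq.trans (tsum_congr fun m => ?_) hsum.tsum_eq
  simp only [show μ - 1 + m + 1 = μ + m by ring]
  rw [inv_Gamma_eq_mul_inv_Gamma_add_one]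
  ring

theorem besselJ_eq_rpow_mul_besselClifford (μ : ℝ) {z : ℝ} (hz : 0 < z) :
    besselJ μ z = (z / 2) ^ μ * besselClifford μ (-(z / 2) ^ 2) := by
  rw [besselJ, besselClifford, expGenFun, ← tsum_mul_left]
  refine tsum_congr fun m => ?_
  rw [Real.rpow_add (by positivity), Real.rpow_mul (by positivity), Real.rpow_natCast,
    Real.rpow_two, neg_pow ((z / 2) ^ 2)]
  ring

theorem hasDerivAt_besselJ_raise (μ : ℝ) {z : ℝ} (hz : 0 < z) :
    HasDerivAt (besselJ μ) (μ / z * besselJ μ z - besselJ (μ + 1) z) z := by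
  have hhalf : HasDerivAt (fun z : ℝ => z / 2) (1 / 2) z := (hasDerivAt_id z).div_const 2
  have hprod := (hhalf.rpow_const (p := μ) (Or.inl (by positivity))).mul
    ((hasDerivAt_besselClifford μ _).comp z (hhalf.pow 2).neg)
  have heq : besselJ μ =ᶠ[𝓝 z] fun z => (z / 2) ^ μ * besselClifford μ (-(z / 2) ^ 2) := by
    filter_upwards [lt_mem_nhds hz] with y hy using besselJ_eq_rpow_mul_besselClifford μ hy
  refine (hprod.congr_of_eventuallyEq heq).congr_deriv ?_
  rw [besselJ_eq_rpow_mul_besselClifford μ hz, besselJ_eq_rpow_mul_besselClifford _ hz,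
    Real.rpow_sub_one (by positivity), Real.rpow_add_one (by positivity)]
  simp only [Function.comp_apply, Pi.neg_apply, Pi.pow_apply, Nat.cast_ofNat, Nat.add_one_sub_one,
    pow_one]
  field_simp
  ring

theorem besselJ_sub_one_add_besselJ_add_one (μ : ℝ) {z : ℝ} (hz : 0 < z) :
    besselJ (μ - 1) z + besselJ (μ + 1) z = 2 * μ / z * besselJ μ z := by
  simp only [besselJ_eq_rpow_mul_besselClifford _ hz, besselClifford_sub_one μ]
  rw [Real.rpow_sub_one (by positivity), Real.rpow_add_one (by positivity)]
  field_simp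
  ring

theorem hasDerivAt_besselJ_lower (μ : ℝ) {z : ℝ} (hz : 0 < z) :
    HasDerivAt (besselJ μ) (besselJ (μ - 1) z - μ / z * besselJ μ z) z := by
  refine (hasDerivAt_besselJ_raise μ hz).congr_deriv ?_
  linear_combination -besselJ_sub_one_add_besselJ_add_one μ hz

theorem sqrt_mul_besselJ_eq {μ : ℝ} (hμ : -(1 / 2) < μ) {z : ℝ} (hz : 0 ≤ z) :
    √z * besselJ μ z = √2 * (z / 2) ^ (μ + 1 / 2) * besselClifford μ (-(z / 2) ^ 2) := by
  rcases hz.eq_or_lt with rfl | hz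
  · rw [Real.sqrt_zero, zero_div, Real.zero_rpow (by linarith), mul_zero, zero_mul, zero_mul]
  · rw [besselJ_eq_rpow_mul_besselClifford μ hz, Real.rpow_add (by positivity),
      ← Real.sqrt_eq_rpow, Real.sqrt_div hz.le]
    field_simp

theorem continuousOn_sqrt_mul_besselJ {μ : ℝ} (hμ : -(1 / 2) < μ) :
    ContinuousOn (fun z => √z * besselJ μ z) (Ici 0) := by
  have hC : Continuous (besselClifford μ) :=
    continuous_iff_continuousAt.2 fun w => (hasDerivAt_besselClifford μ w).continuousAt
  have hrpow : Continuous fun z : ℝ => (z / 2) ^ (μ + 1 / 2) :=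
    (continuous_id.div_const 2).rpow_const fun _ => Or.inr (by linarith)
  have hcont : Continuous fun z : ℝ =>
      √2 * (z / 2) ^ (μ + 1 / 2) * besselClifford μ (-(z / 2) ^ 2) := by fun_prop
  exact hcont.continuousOn.congr fun z hz => sqrt_mul_besselJ_eq hμ hz

/-- The function `W_ε(z) = √z (J_{ν-1}(z) + ε J_ν(z))`. For `ε = -1` and `ε = 1` its positive zeroes
are `λ⁻_{ν-1,k}` and `λ⁺_{ν-1,k}`; the factor `√z` removes the diagonal part of the differential
system satisfied by the two functions `J_{ν-1} ± J_ν`. -/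
noncomputable def sqrtMulBesselComb (ν ε z : ℝ) : ℝ :=
  √z * (besselJ (ν - 1) z + ε * besselJ ν z)

section SqrtMulBesselComb

variable {ν ε : ℝ}

theorem sqrtMulBesselComb_zero : sqrtMulBesselComb ν ε 0 = 0 := by
  simp [sqrtMulBesselComb]

theorem sqrtMulBesselComb_eq_zero_iff {z : ℝ} (hz : 0 < z) :
    sqrtMulBesselComb ν ε z = 0 ↔ besselJ (ν - 1) z + ε * besselJ ν z = 0 := by
  simp [sqrtMulBesselComb, (Real.sqrt_pos.2 hz).ne']

theorem continuousOn_sqrtMulBesselComb (hν : 1 / 2 < ν) :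
    ContinuousOn (sqrtMulBesselComb ν ε) (Ici 0) := by
  have hlow := continuousOn_sqrt_mul_besselJ (μ := ν - 1) (by linarith)
  have hhigh := continuousOn_sqrt_mul_besselJ (μ := ν) (by linarith)
  refine (hlow.add (hhigh.const_mul ε)).congr fun z _ => ?_
  simp only [sqrtMulBesselComb, Pi.add_apply]
  ring

theorem hasDerivAt_sqrtMulBesselComb (hε : ε ^ 2 = 1) {z : ℝ} (hz : 0 < z) :
    HasDerivAt (sqrtMulBesselComb ν ε) (((ν - 1 / 2) / z + ε) * sqrtMulBesselComb ν (-ε) z) z := by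
  have hlow := hasDerivAt_besselJ_raise (ν - 1) hz
  rw [sub_add_cancel] at hlow
  have hhigh := (hasDerivAt_besselJ_lower ν hz).const_mul ε
  refine ((Real.hasDerivAt_sqrt hz.ne').mul (hlow.add hhigh)).congr_deriv ?_
  have hsqrt : 1 / (2 * √z) = √z / (2 * z) := by
    rw [div_eq_div_iff (by positivity) (by positivity)]
    linear_combination -2 * Real.mul_self_sqrt hz.le
  rw [hsqrt]
  simp only [sqrtMulBesselComb, Pi.add_apply]
  linear_combination √z * besselJ ν z * hε

theorem exists_sqrtMulBesselComb_neg_eq_zero (hν : 1 / 2 < ν) (hε : ε ^ 2 = 1) {a b : ℝ}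
    (ha : 0 ≤ a) (hab : a < b) (hcoef : ∀ c ∈ Ioo a b, (ν - 1 / 2) / c + ε ≠ 0)
    (hza : sqrtMulBesselComb ν ε a = 0) (hzb : sqrtMulBesselComb ν ε b = 0) :
    ∃ c ∈ Ioo a b, sqrtMulBesselComb ν (-ε) c = 0 := by
  obtain ⟨c, hc, hderiv⟩ := exists_hasDerivAt_eq_zero hab
    ((continuousOn_sqrtMulBesselComb hν).mono fun z hz => ha.trans hz.1) (hza.trans hzb.symm)
    fun z hz => hasDerivAt_sqrtMulBesselComb hε (ha.trans_lt hz.1)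
  exact ⟨c, hc, (mul_eq_zero.1 hderiv).resolve_left (hcoef c hc)⟩

theorem exists_sqrtMulBesselComb_neg_one_eq_zero (hν : 1 / 2 < ν) {a b : ℝ}
    (ha : 0 ≤ a) (hab : a < b)
    (hza : sqrtMulBesselComb ν 1 a = 0) (hzb : sqrtMulBesselComb ν 1 b = 0) :
    ∃ c ∈ Ioo a b, sqrtMulBesselComb ν (-1) c = 0 := by
  refine exists_sqrtMulBesselComb_neg_eq_zero hν (by norm_num) ha hab (fun c hc => ?_) hza hzb
  have : 0 < (ν - 1 / 2) / c := div_pos (by linarith) (ha.trans_lt hc.1)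
  positivity

theorem exists_sqrtMulBesselComb_one_eq_zero (hν : 1 / 2 < ν) {a b : ℝ}
    (ha : 0 ≤ a) (hab : a < b) (hturn : ν - 1 / 2 ∉ Ioo a b)
    (hza : sqrtMulBesselComb ν (-1) a = 0) (hzb : sqrtMulBesselComb ν (-1) b = 0) :
    ∃ c ∈ Ioo a b, sqrtMulBesselComb ν 1 c = 0 := by
  rw [← neg_neg (1 : ℝ)]
  refine exists_sqrtMulBesselComb_neg_eq_zero hν (by norm_num) ha hab (fun c hc hcoef => ?_) hza hzb
  rw [← sub_eq_add_neg, sub_eq_zero, div_eq_one_iff_eq (ha.trans_lt hc.1).ne'] at hcoef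
  exact hturn (hcoef ▸ hc)

end SqrtMulBesselComb

theorem lt_of_forall_exists_mem_Ioo {α : Type*} [LinearOrder α] {x y : ℕ → α}
    (hx : StrictMonoOn x (Ici 1)) (hbase : x 1 < y 1)
    (hsep : ∀ n, 1 ≤ n → ∃ j, 1 ≤ j ∧ x j ∈ Ioo (y n) (y (n + 1))) {k : ℕ} (hk : 1 ≤ k) :
    x k < y k := by
  induction k, hk using Nat.le_induction with
  | base => exact hbase
  | succ n hn ih =>
    obtain ⟨j, hj, hlow, hhigh⟩ := hsep n hn
    have hnj : n < j := (hx.lt_iff_lt hn hj).1 (ih.trans hlow)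
    exact (hx.monotoneOn (mem_Ici.2 n.succ_pos) hj hnj).trans_lt hhigh

namespace EnumPosZeros

variable {f g : ℝ → ℝ} {x y : ℕ → ℝ}

theorem congr (hx : EnumPosZeros f x) (hfg : ∀ z, 0 < z → (f z = 0 ↔ g z = 0)) :
    EnumPosZeros g x :=
  ⟨hx.1, fun k hk => ⟨(hx.2.1 k hk).1, (hfg _ (hx.2.1 k hk).1).1 (hx.2.1 k hk).2⟩,
    fun z hz hgz => hx.2.2 z hz ((hfg z hz).2 hgz)⟩

theorem pos (hx : EnumPosZeros f x) {k : ℕ} (hk : 1 ≤ k) : 0 < x k :=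
  (hx.2.1 k hk).1

theorem apply_eq_zero (hx : EnumPosZeros f x) {k : ℕ} (hk : 1 ≤ k) : f (x k) = 0 :=
  (hx.2.1 k hk).2

theorem lt_succ (hx : EnumPosZeros f x) {k : ℕ} (hk : 1 ≤ k) : x k < x (k + 1) :=
  hx.1 hk (mem_Ici.2 k.succ_pos) k.lt_succ_self

theorem first_le_apply (hx : EnumPosZeros f x) {k : ℕ} (hk : 1 ≤ k) : x 1 ≤ x k :=
  hx.1.monotoneOn self_mem_Ici hk hk

theorem first_le_of_apply_eq_zero (hx : EnumPosZeros f x) {z : ℝ} (hz : 0 < z) (hfz : f z = 0) :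
    x 1 ≤ z := by
  obtain ⟨j, hj, rfl⟩ := hx.2.2 z hz hfz
  exact hx.first_le_apply hj

theorem exists_mem_Ioo (hx : EnumPosZeros f x) {a b : ℝ} (ha : 0 ≤ a)
    (hf : ∃ c ∈ Ioo a b, f c = 0) : ∃ j, 1 ≤ j ∧ x j ∈ Ioo a b := by
  obtain ⟨c, hc, hfc⟩ := hf
  obtain ⟨j, hj, rfl⟩ := hx.2.2 c (ha.trans_lt hc.1) hfc
  exact ⟨j, hj, hc⟩

theorem interlace (hx : EnumPosZeros f x) (hy : EnumPosZeros g y) (hfirst : x 1 < y 1)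
    (hf : ∀ k, 1 ≤ k → ∃ c ∈ Ioo (y k) (y (k + 1)), f c = 0)
    (hg : ∀ k, 1 ≤ k → ∃ c ∈ Ioo (x k) (x (k + 1)), g c = 0) {k : ℕ} (hk : 1 ≤ k) :
    x k < y k ∧ y k < x (k + 1) := by
  have hxsep : ∀ n, 1 ≤ n → ∃ j, 1 ≤ j ∧ x j ∈ Ioo (y n) (y (n + 1)) := fun n hn =>
    hx.exists_mem_Ioo (hy.pos hn).le (hf n hn)
  have hysep : ∀ n, 1 ≤ n → ∃ j, 1 ≤ j ∧ y j ∈ Ioo (x n) (x (n + 1)) := fun n hn =>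
    hy.exists_mem_Ioo (hx.pos hn).le (hg n hn)
  obtain ⟨j, hj, -, hlt⟩ := hysep 1 le_rfl
  exact ⟨lt_of_forall_exists_mem_Ioo hx.1 hfirst hxsep hk,
    lt_of_forall_exists_mem_Ioo (y := fun n => x (n + 1)) hy.1 ((hy.first_le_apply hj).trans_lt hlt)
      (fun n _ => hysep (n + 1) n.succ_pos) hk⟩

end EnumPosZeros

theorem sub_half_lt_first_zero_sqrtMulBesselComb_neg_one {ν : ℝ} (hν : 1 / 2 < ν) {x : ℕ → ℝ}
    (hx : EnumPosZeros (sqrtMulBesselComb ν (-1)) x) : ν - 1 / 2 < x 1 := by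
  by_contra! hle
  obtain ⟨b, hb, hb0⟩ := exists_sqrtMulBesselComb_one_eq_zero hν le_rfl (hx.pos le_rfl)
    (fun h => h.2.not_ge hle) sqrtMulBesselComb_zero (hx.apply_eq_zero le_rfl)
  obtain ⟨c, hc, hc0⟩ := exists_sqrtMulBesselComb_neg_one_eq_zero hν le_rfl hb.1
    sqrtMulBesselComb_zero hb0
  exact (hx.first_le_of_apply_eq_zero hc.1 hc0).not_gt (hc.2.trans hb.2)

theorem interlace_sqrtMulBesselComb {ν : ℝ} (hν : 1 / 2 < ν) {x y : ℕ → ℝ}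
    (hx : EnumPosZeros (sqrtMulBesselComb ν (-1)) x)
    (hy : EnumPosZeros (sqrtMulBesselComb ν 1) y) {k : ℕ} (hk : 1 ≤ k) :
    x k < y k ∧ y k < x (k + 1) := by
  have hfirst : x 1 < y 1 := by
    obtain ⟨c, hc, hc0⟩ := exists_sqrtMulBesselComb_neg_one_eq_zero hν le_rfl (hy.pos le_rfl)
      sqrtMulBesselComb_zero (hy.apply_eq_zero le_rfl)
    exact (hx.first_le_of_apply_eq_zero hc.1 hc0).trans_lt hc.2
  have hturn : ∀ n, 1 ≤ n → ν - 1 / 2 < x n := fun n hn =>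
    (sub_half_lt_first_zero_sqrtMulBesselComb_neg_one hν hx).trans_le (hx.first_le_apply hn)
  exact hx.interlace hy hfirst
    (fun n hn => exists_sqrtMulBesselComb_neg_one_eq_zero hν (hy.pos hn).le (hy.lt_succ hn)
      (hy.apply_eq_zero hn) (hy.apply_eq_zero n.succ_pos))
    (fun n hn => exists_sqrtMulBesselComb_one_eq_zero hν (hx.pos hn).le (hx.lt_succ hn)
      (fun h => h.1.not_gt (hturn n hn)) (hx.apply_eq_zero hn) (hx.apply_eq_zero n.succ_pos))
    hk

theorem stmt17_general {ν : ℝ} (hν : 1 / 2 < ν) {k : ℕ} (hk : 1 ≤ k) {lam lamp : ℕ → ℝ}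
    (hlam : EnumPosZeros (fun z => besselJ (ν - 1) z - besselJ ν z) lam)
    (hlamp : EnumPosZeros (fun z => besselJ (ν - 1) z + besselJ ν z) lamp) :
    lam k < lamp k ∧ lamp k < lam (k + 1) :=
  interlace_sqrtMulBesselComb hν
    (hlam.congr fun z hz => by rw [sqrtMulBesselComb_eq_zero_iff hz, neg_one_mul, sub_eq_add_neg])
    (hlamp.congr fun z hz => by rw [sqrtMulBesselComb_eq_zero_iff hz, one_mul]) hk

/-- For `ν ≥ 1` and every `k ≥ 1`, `λ⁻_{ν−1,k} < λ⁺_{ν−1,k} < λ⁻_{ν−1,k+1}`: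
between two consecutive positive zeroes of `J_{ν−1} − J_ν` there is exactly one positive
zero of `J_{ν−1} + J_ν`, and vice versa. -/
theorem stmt17 (ν : ℝ) (hν : 1 ≤ ν) (k : ℕ) (hk : 1 ≤ k)
    (lam lamp : ℕ → ℝ)
    (hlam : EnumPosZeros (fun z => besselJ (ν - 1) z - besselJ ν z) lam)
    (hlamp : EnumPosZeros (fun z => besselJ (ν - 1) z + besselJ ν z) lamp) :
    lam k < lamp k ∧ lamp k < lam (k + 1) :=
  stmt17_general (by linarith) hk hlam hlamp
end
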